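/- Let $(X,\mu)$ and $(Y,\nu)$ be $\sigma$-finite measure spaces, $S\ge 1$, and let $w_1,\dots,w_S>0$ with $\sum_{s=1}^S w_s=1$. Let $\mathcal S_1,\dots,\mathcal S_S\subseteq Y\times X$ be measurable (the strata), let $f(y|x;\theta)\ge 0$ be a family of functions that are measurable in $(y,x)$ for each value of the parameter $\theta$, and put $Q_{s|X}(x;\theta)=\int f(y|x;\theta)\,1_{(y,x)\in\mathcal S_s}\,d\nu(y)$ (if this is infinite, use the conventions $0\cdot\infty=0$ and $a/\infty=0$ for $a\in[0,\infty]$). Let $\theta_0$ be a value of the parameter (the true one) and $g_0\ge 0$ a measurable function on $X$ (the true density) with $$Q_s(\theta_0,g_0)=\int Q_{s|X}(x;\theta_0)\,g_0(x)\,d\mu(x)\in(0,\infty)\qquad(s=1,\dots,S).$$ Let $E_{s,0}$ denote expectation for the probability density $f(y|x;\theta_0)1_{(y,x)\in\mathcal S_s}g_0(x)/Q_s(\theta_0,g_0)$ with respect to $\nu\otimes\mu$, and let $f^*_0(x)=\sum_{s=1}^S w_s\,Q_{s|X}(x;\theta_0)g_0(x)/Q_s(\theta_0,g_0)$. For a parameter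 value $\theta$ and $q=(q_1,\dots,q_{S-1},1)$ with all $q_j>0$ let $$\hat g_{\theta,q}(x)=\frac{f^*_0(x)}{\sum_{s'=1}^S w_{s'}Q_{s'|X}(x;\theta)/q_{s'}},\qquad p^*_s(y,x;\theta,q)=\frac{f(y|x;\theta)\,1_{(y,x)\in\mathcal S_s}\,\hat g_{\theta,q}(x)}{q_s}.$$ Fix $\theta$ and such a $q$, and assume that $\sum_{s'=1}^S w_{s'}Q_{s'|X}(x;\theta)/q_{s'}>0$ for all $x$ and that $E_{s,0}|\log p^*_s(Y,X;\theta,q)|<\infty$ for every $s$, where $\log 0=-\infty$, $\log\infty=\infty$ and $|\pm\infty|=\infty$. Then $E_{s,0}|\log p^*_s(Y,X;\theta,q')|<\infty$ for every $s$ and every $q'=(q'_1,\dots,q'_{S-1},1)$ with all $q'_j>0$; and for each $j=1,\dots,S-1$ the integral $\int Q_{j|X}(x;\theta)\hat g_{\theta,q}(x)\,d\mu(x)$ is finite, and the partial derivative at $q$ exists and equals $$\frac{\partial}{\partial q_j}\sum_{s=1}^S w_s\,E_{s,0}[\log p^*_s(Y,X;\theta,q)]=\frac{w_j}{q_j^2}\left(\int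 Q_{j|X}(x;\theta)\,\hat g_{\theta,q}(x)\,d\mu(x)-q_j\right).$$ In particular, it vanishes if $\int Q_{j|X}(x;\theta)\,\hat g_{\theta,q}(x)\,d\mu(x)=q_j$; hence all these partial derivatives vanish at any $q$ for which this holds for $j=1,\dots,S-1$. -/

import Mathlib

open MeasureTheory
open scoped NNReal ENNReal

noncomputable section

namespace StratifiedSampling

variable {X Y : Type*} [MeasurableSpace X] [MeasurableSpace Y]

/-- `Q_{s|X}(x) = ∫ f(y|x) 1_{(y,x) ∈ A} dν(y)`, where `A` is the stratum. -/
def condProb (ν : Measure Y) (A : Set (Y × X)) (f : Y → X → ℝ≥0) (x : X) : ℝ≥0∞ :=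
  ∫⁻ y, (f y x : ℝ≥0∞) * A.indicator 1 (y, x) ∂ν

/-- `Q_s(f, g) = ∫ Q_{s|X}(x) g(x) dμ(x)`. -/
def prob (μ : Measure X) (ν : Measure Y) (A : Set (Y × X)) (f : Y → X → ℝ≥0) (g : X → ℝ≥0) :
    ℝ≥0∞ :=
  ∫⁻ x, condProb ν A f x * g x ∂μ

/-- The distribution of `(Y, X)` given the stratum `A`: it has density
`f(y|x) 1_{(y,x) ∈ A} g(x) / Q_s(f, g)` with respect to `ν ⊗ μ`. -/
def law (μ : Measure X) (ν : Measure Y) (A : Set (Y × X)) (f : Y → X → ℝ≥0) (g : X → ℝ≥0) :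
    Measure (Y × X) :=
  (ν.prod μ).withDensity fun z =>
    (f z.1 z.2 : ℝ≥0∞) * A.indicator 1 z * g z.2 / prob μ ν A f g

/-- `f*₀(x) = ∑ s, w_s Q_{s|X}(x) g(x) / Q_s(f, g)`. -/
def mixDensity {S : ℕ} (μ : Measure X) (ν : Measure Y) (w : Fin S → ℝ≥0)
    (A : Fin S → Set (Y × X)) (f : Y → X → ℝ≥0) (g : X → ℝ≥0) (x : X) : ℝ≥0∞ :=
  ∑ s, (w s : ℝ≥0∞) * condProb ν (A s) f x * g x / prob μ ν (A s) f g

/-- `∑ s, w_s Q_{s|X}(x) / q_s`. -/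
def denom {S : ℕ} (ν : Measure Y) (w : Fin S → ℝ≥0) (A : Fin S → Set (Y × X))
    (f : Y → X → ℝ≥0) (q : Fin S → ℝ) (x : X) : ℝ≥0∞ :=
  ∑ s, (w s : ℝ≥0∞) * condProb ν (A s) f x / ENNReal.ofReal (q s)

/-- `ĝ_{θ,q}(x) = f*₀(x) / ∑ s, w_s Q_{s|X}(x; θ) / q_s`, with `f = f(·|·; θ)`,
`f₀ = f(·|·; θ₀)`. -/
def gHat {S : ℕ} (μ : Measure X) (ν : Measure Y) (w : Fin S → ℝ≥0) (A : Fin S → Set (Y × X))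
    (f f₀ : Y → X → ℝ≥0) (g₀ : X → ℝ≥0) (q : Fin S → ℝ) (x : X) : ℝ≥0∞ :=
  mixDensity μ ν w A f₀ g₀ x / denom ν w A f q x

/-- `p*_s(y, x; θ, q) = f(y|x; θ) 1_{(y,x) ∈ 𝒮_s} ĝ_{θ,q}(x) / q_s`. -/
def pStar {S : ℕ} (μ : Measure X) (ν : Measure Y) (w : Fin S → ℝ≥0) (A : Fin S → Set (Y × X))
    (f f₀ : Y → X → ℝ≥0) (g₀ : X → ℝ≥0) (q : Fin S → ℝ) (s : Fin S) (z : Y × X) : ℝ≥0∞ :=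
  (f z.1 z.2 : ℝ≥0∞) * (A s).indicator 1 z * gHat μ ν w A f f₀ g₀ q z.2 / ENNReal.ofReal (q s)

/-- `E|log p| < ∞` under `P`, where `log` is extended-real valued: `log 0 = -∞` and
`|±∞| = ∞`. In particular it forces `0 < p < ∞` almost surely. -/
def FiniteLogMean {Ω : Type*} [MeasurableSpace Ω] (P : Measure Ω) (p : Ω → ℝ≥0∞) : Prop :=
  ∫⁻ z, (ENNReal.log (p z)).abs ∂P < ∞

/-- `E[log p]` under `P`; meaningful when `FiniteLogMean P p` holds, in which case `log p` is
almost surely real. -/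
def logMean {Ω : Type*} [MeasurableSpace Ω] (P : Measure Ω) (p : Ω → ℝ≥0∞) : ℝ :=
  ∫ z, (ENNReal.log (p z)).toReal ∂P

/-- The vector `(q_1, …, q_{S-1}, 1)`, with `S = n + 1`. -/
def withOne {n : ℕ} (q : Fin n → ℝ) : Fin (n + 1) → ℝ :=
  Fin.snoc (α := fun _ => ℝ) q 1

/-- `∑ s, w_s E_{s,0}[log p*_s(Y, X; θ, q)]` as a function of `(q_1, …, q_{S-1})`. -/
def expectedLogLik {n : ℕ} (μ : Measure X) (ν : Measure Y) (w : Fin (n + 1) → ℝ≥0)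
    (A : Fin (n + 1) → Set (Y × X)) (f f₀ : Y → X → ℝ≥0) (g₀ : X → ℝ≥0) (q : Fin n → ℝ) : ℝ :=
  ∑ s, (w s : ℝ) *
    logMean (law μ ν (A s) f₀ g₀) (pStar μ ν w A f f₀ g₀ (withOne q) s)

end StratifiedSampling

end

open StratifiedSampling

/-!
By Bayes' rule, under the fitted model the stratum `j` has posterior probability
`π_j(x) = (w_j Q_{j|X}(x) / q_j) / ∑ s, w_s Q_{s|X}(x) / q_s` given `x`, and
`∂ log p*_s / ∂ q_j = (π_j - 1_{s = j}) / q_j`. Since `0 ≤ π_j ≤ 1`, these derivatives are bounded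
for `q_j` away from `0`, so one may differentiate under the expectation. The mixture of the laws
of `X` in the strata has density `f*₀`, so averaging `π_j` over it gives
`(w_j / q_j) ∫ Q_{j|X} ĝ`. A change of `q` multiplies `p*_s` by a factor bounded above and
below, hence preserves the finiteness of `E|log p*_s|`.
-/

namespace StratifiedSampling

section LogMean

lemma toReal_log (p : ℝ≥0∞) : (ENNReal.log p).toReal = Real.log p.toReal := by
  rcases eq_or_ne p 0 with rfl | h0
  · simp
  rcases eq_or_ne p ∞ with rfl | htop
  · simp
  rw [ENNReal.log_pos_real h0 htop, EReal.toReal_coe]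

lemma abs_log_eq_top {p : ℝ≥0∞} (hp : p.toReal = 0) : (ENNReal.log p).abs = ∞ := by
  rcases ENNReal.toReal_eq_zero_iff p |>.1 hp with rfl | rfl <;> simp

lemma abs_log_eq_enorm {p : ℝ≥0∞} (hp : p.toReal ≠ 0) :
    (ENNReal.log p).abs = ‖Real.log p.toReal‖ₑ := by
  obtain ⟨h0, htop⟩ := ENNReal.toReal_ne_zero.1 hp
  rw [ENNReal.log_pos_real h0 htop, EReal.abs_def, Real.enorm_eq_ofReal_abs]

lemma measurable_ereal_abs : Measurable EReal.abs := by
  refine EReal.measurable_of_measurable_real ?_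
  simp only [EReal.abs_def]
  fun_prop

lemma toReal_ne_zero_of_le_mul {a b C C' : ℝ≥0∞} (hC : C ≠ ∞) (hab : a ≤ C * b)
    (hba : b ≤ C' * a) (hb : b.toReal ≠ 0) : a.toReal ≠ 0 := by
  obtain ⟨hb0, hb_top⟩ := ENNReal.toReal_ne_zero.1 hb
  refine ENNReal.toReal_ne_zero.2 ⟨?_, ne_top_of_le_ne_top (ENNReal.mul_ne_top hC hb_top) hab⟩
  rintro rfl
  exact hb0 (by simpa using hba)

lemma log_toReal_le_add {a b C : ℝ≥0∞} (hC : C ≠ ∞) (hab : a ≤ C * b) (ha : a.toReal ≠ 0)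
    (hb : b.toReal ≠ 0) :
    Real.log a.toReal ≤ Real.log C.toReal + Real.log b.toReal := by
  have hb_top := (ENNReal.toReal_ne_zero.1 hb).2
  have hle : a.toReal ≤ C.toReal * b.toReal := by
    rw [← ENNReal.toReal_mul]
    exact ENNReal.toReal_mono (ENNReal.mul_ne_top hC hb_top) hab
  have ha_pos : 0 < a.toReal := ENNReal.toReal_nonneg.lt_of_ne' ha
  have hC0 : C.toReal ≠ 0 := left_ne_zero_of_mul (ha_pos.trans_le hle).ne'
  rw [← Real.log_mul hC0 hb]
  exact Real.log_le_log ha_pos hle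

lemma abs_log_le_of_le_mul {a b C C' : ℝ≥0∞} (hC : C ≠ ∞) (hC' : C' ≠ ∞) (hab : a ≤ C * b)
    (hba : b ≤ C' * a) :
    (ENNReal.log a).abs ≤
      (ENNReal.log b).abs + ENNReal.ofReal (|Real.log C.toReal| + |Real.log C'.toReal|) := by
  by_cases hb : b.toReal = 0
  · simp [abs_log_eq_top hb]
  have ha := toReal_ne_zero_of_le_mul hC hab hba hb
  rw [abs_log_eq_enorm ha, abs_log_eq_enorm hb, Real.enorm_eq_ofReal_abs,
    Real.enorm_eq_ofReal_abs, ← ENNReal.ofReal_add (abs_nonneg _) (by positivity)]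
  refine ENNReal.ofReal_le_ofReal (abs_le.2 ⟨?_, ?_⟩)
  · linarith [log_toReal_le_add hC' hba hb ha, neg_abs_le (Real.log b.toReal),
      le_abs_self (Real.log C'.toReal), abs_nonneg (Real.log C.toReal)]
  · linarith [log_toReal_le_add hC hab ha hb, le_abs_self (Real.log b.toReal),
      le_abs_self (Real.log C.toReal), abs_nonneg (Real.log C'.toReal)]

variable {Ω : Type*} [MeasurableSpace Ω] {P : Measure Ω} {p p' : Ω → ℝ≥0∞}

lemma FiniteLogMean.ae_toReal_ne_zero (h : FiniteLogMean P p) (hp : Measurable p) :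
    ∀ᵐ z ∂P, (p z).toReal ≠ 0 := by
  filter_upwards [ae_lt_top (measurable_ereal_abs.comp hp.ennreal_log) h.ne] with z hz hpz
  exact hz.ne (abs_log_eq_top hpz)

lemma FiniteLogMean.integrable_log (h : FiniteLogMean P p) (hp : Measurable p) :
    Integrable (fun z => Real.log (p z).toReal) P := by
  refine ⟨hp.ennreal_toReal.log.aestronglyMeasurable, ?_⟩
  rw [HasFiniteIntegral, lintegral_congr_ae
    ((h.ae_toReal_ne_zero hp).mono fun z hz => (abs_log_eq_enorm hz).symm)]
  exact h

lemma FiniteLogMean.of_le_mul [IsFiniteMeasure P] (h : FiniteLogMean P p) {C C' : ℝ≥0∞}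
    (hC : C ≠ ∞) (hC' : C' ≠ ∞) (hle : ∀ z, p' z ≤ C * p z) (hle' : ∀ z, p z ≤ C' * p' z) :
    FiniteLogMean P p' := by
  refine (lintegral_mono fun z => abs_log_le_of_le_mul hC hC' (hle z) (hle' z)).trans_lt ?_
  rw [lintegral_add_right _ measurable_const, lintegral_const]
  exact ENNReal.add_lt_top.2 ⟨h, ENNReal.mul_lt_top ENNReal.ofReal_lt_top (measure_lt_top P _)⟩

lemma logMean_eq_integral_log (P : Measure Ω) (p : Ω → ℝ≥0∞) :
    logMean P p = ∫ z, Real.log (p z).toReal ∂P := by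
  simp only [logMean, toReal_log]

end LogMean

section Measurability

variable {X Y : Type*} [MeasurableSpace X] [MeasurableSpace Y] {μ : Measure X} {ν : Measure Y}
  {f f₀ : Y → X → ℝ≥0} {g₀ : X → ℝ≥0}

lemma measurable_mul_indicator {B : Set (Y × X)} (hB : MeasurableSet B)
    (hf : Measurable fun z : Y × X => f z.1 z.2) :
    Measurable fun z : Y × X => (f z.1 z.2 : ℝ≥0∞) * B.indicator 1 z :=
  hf.coe_nnreal_ennreal.mul (measurable_one.indicator hB)

variable [SFinite ν]

lemma measurable_condProb {B : Set (Y × X)} (hB : MeasurableSet B)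
    (hf : Measurable fun z : Y × X => f z.1 z.2) : Measurable (condProb ν B f) :=
  (measurable_mul_indicator hB hf).lintegral_prod_left'

variable {S : ℕ} {w : Fin S → ℝ≥0} {A : Fin S → Set (Y × X)}

lemma measurable_denom (hA : ∀ s, MeasurableSet (A s))
    (hf : Measurable fun z : Y × X => f z.1 z.2) (q : Fin S → ℝ) :
    Measurable (denom ν w A f q) :=
  Finset.measurable_sum _ fun s _ =>
    ((measurable_condProb (hA s) hf).const_mul _).div_const _

lemma measurable_mixDensity (hA : ∀ s, MeasurableSet (A s))
    (hf₀ : Measurable fun z : Y × X => f₀ z.1 z.2) (hg₀ : Measurable g₀) :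
    Measurable (mixDensity μ ν w A f₀ g₀) :=
  Finset.measurable_sum _ fun s _ =>
    (((measurable_condProb (hA s) hf₀).const_mul _).mul hg₀.coe_nnreal_ennreal).div_const _

lemma measurable_gHat (hA : ∀ s, MeasurableSet (A s))
    (hf : Measurable fun z : Y × X => f z.1 z.2)
    (hf₀ : Measurable fun z : Y × X => f₀ z.1 z.2) (hg₀ : Measurable g₀) (q : Fin S → ℝ) :
    Measurable (gHat μ ν w A f f₀ g₀ q) :=
  (measurable_mixDensity hA hf₀ hg₀).div (measurable_denom hA hf q)

lemma measurable_pStar (hA : ∀ s, MeasurableSet (A s))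
    (hf : Measurable fun z : Y × X => f z.1 z.2)
    (hf₀ : Measurable fun z : Y × X => f₀ z.1 z.2) (hg₀ : Measurable g₀)
    (q : Fin S → ℝ) (s : Fin S) : Measurable (pStar μ ν w A f f₀ g₀ q s) :=
  ((measurable_mul_indicator (hA s) hf).mul
    ((measurable_gHat hA hf hf₀ hg₀ q).comp measurable_snd)).div_const _

end Measurability

section Law

variable {X Y : Type*} [MeasurableSpace X] [MeasurableSpace Y] {μ : Measure X} {ν : Measure Y}
  [SFinite μ] [SFinite ν] {f : Y → X → ℝ≥0} {g : X → ℝ≥0}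

lemma lintegral_snd_law {B : Set (Y × X)} (hB : MeasurableSet B)
    (hf : Measurable fun z : Y × X => f z.1 z.2) (hg : Measurable g)
    {h : X → ℝ≥0∞} (hh : Measurable h) :
    ∫⁻ z, h z.2 ∂law μ ν B f g =
      ∫⁻ x, condProb ν B f x * g x / prob μ ν B f g * h x ∂μ := by
  have hk := measurable_mul_indicator hB hf
  have hdensity : Measurable fun z : Y × X =>
      (f z.1 z.2 : ℝ≥0∞) * B.indicator 1 z * g z.2 / prob μ ν B f g :=
    (hk.mul (hg.coe_nnreal_ennreal.comp measurable_snd)).div_const _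
  have hh_snd : Measurable fun z : Y × X => h z.2 := hh.comp measurable_snd
  rw [law, lintegral_withDensity_eq_lintegral_mul _ hdensity hh_snd,
    lintegral_prod_symm _ (hdensity.mul hh_snd).aemeasurable]
  refine lintegral_congr fun x => ?_
  have hkx : Measurable fun y => (f y x : ℝ≥0∞) * B.indicator 1 (y, x) :=
    hk.comp measurable_prodMk_right
  simp only [Pi.mul_apply, condProb, div_eq_mul_inv, mul_assoc]
  simp only [← mul_assoc (f _ x : ℝ≥0∞)]
  rw [lintegral_mul_const _ hkx]

lemma isProbabilityMeasure_law {B : Set (Y × X)} (hB : MeasurableSet B)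
    (hf : Measurable fun z : Y × X => f z.1 z.2) (hg : Measurable g)
    (h0 : prob μ ν B f g ≠ 0) (htop : prob μ ν B f g ≠ ∞) :
    IsProbabilityMeasure (law μ ν B f g) := by
  constructor
  have hm : Measurable fun x => condProb ν B f x * g x :=
    (measurable_condProb hB hf).mul hg.coe_nnreal_ennreal
  calc law μ ν B f g Set.univ = ∫⁻ x, condProb ν B f x * g x / prob μ ν B f g ∂μ := by
        simpa using lintegral_snd_law (μ := μ) (ν := ν) hB hf hg measurable_one
    _ = prob μ ν B f g / prob μ ν B f g := by
        simp only [div_eq_mul_inv, lintegral_mul_const _ hm, prob]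
    _ = 1 := ENNReal.div_self h0 htop

lemma sum_mul_lintegral_snd_law {S : ℕ} (w : Fin S → ℝ≥0) {A : Fin S → Set (Y × X)}
    (hA : ∀ s, MeasurableSet (A s)) (hf : Measurable fun z : Y × X => f z.1 z.2)
    (hg : Measurable g) {h : X → ℝ≥0∞} (hh : Measurable h) :
    ∑ s, (w s : ℝ≥0∞) * ∫⁻ z, h z.2 ∂law μ ν (A s) f g =
      ∫⁻ x, mixDensity μ ν w A f g x * h x ∂μ := by
  have hm (s : Fin S) : Measurable fun x =>
      condProb ν (A s) f x * g x / prob μ ν (A s) f g * h x :=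
    (((measurable_condProb (hA s) hf).mul hg.coe_nnreal_ennreal).div_const _).mul hh
  simp only [lintegral_snd_law (hA _) hf hg hh, ← lintegral_const_mul _ (hm _)]
  rw [← lintegral_finsetSum _ fun s _ => (hm s).const_mul _]
  simp only [mixDensity, Finset.sum_mul, div_eq_mul_inv, mul_assoc]

end Law

section Denom

variable {X Y : Type*} [MeasurableSpace Y] {S : ℕ} {ν : Measure Y} {w : Fin S → ℝ≥0}
  {A : Fin S → Set (Y × X)} {f : Y → X → ℝ≥0} {q q' : Fin S → ℝ} {x : X}

lemma denom_le_mul (hq : ∀ s, 0 < q s) (hq' : ∀ s, 0 < q' s) :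
    denom ν w A f q x ≤ (∑ s, ENNReal.ofReal (q' s / q s)) * denom ν w A f q' x := by
  rw [denom, denom, Finset.mul_sum]
  refine Finset.sum_le_sum fun s hs => ?_
  have hcancel : ENNReal.ofReal (q' s) * (ENNReal.ofReal (q' s))⁻¹ = 1 :=
    ENNReal.mul_inv_cancel (by simpa using hq' s) ENNReal.ofReal_ne_top
  calc (w s : ℝ≥0∞) * condProb ν (A s) f x / ENNReal.ofReal (q s)
    _ = w s * condProb ν (A s) f x / ENNReal.ofReal (q s) *
          (ENNReal.ofReal (q' s) * (ENNReal.ofReal (q' s))⁻¹) := by rw [hcancel, mul_one]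
    _ = ENNReal.ofReal (q' s / q s) *
          (w s * condProb ν (A s) f x / ENNReal.ofReal (q' s)) := by
        rw [ENNReal.ofReal_div_of_pos (hq s)]
        simp only [div_eq_mul_inv]
        ring
    _ ≤ _ := by
        gcongr
        exact Finset.single_le_sum (f := fun t => ENNReal.ofReal (q' t / q t))
          (fun _ _ => zero_le) hs

variable (ν w A f) in
lemma exists_inv_denom_le_mul (hq : ∀ s, 0 < q s) (hq' : ∀ s, 0 < q' s) :
    ∃ C ≠ ∞, ∀ x, (denom ν w A f q' x)⁻¹ ≤ C * (denom ν w A f q x)⁻¹ := by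
  rcases isEmpty_or_nonempty (Fin S) with _ | ⟨⟨s⟩⟩
  · exact ⟨1, ENNReal.one_ne_top, fun x => by simp [denom]⟩
  set C := ∑ t, ENNReal.ofReal (q' t / q t)
  have hC_top : C ≠ ∞ := ENNReal.sum_ne_top.2 fun t _ => ENNReal.ofReal_ne_top
  have hC0 : C ≠ 0 := by
    simpa [C, Finset.sum_eq_zero_iff] using ⟨s, div_pos (hq' s) (hq s)⟩
  refine ⟨C, hC_top, fun x => ?_⟩
  rw [ENNReal.inv_le_iff_inv_le, ENNReal.mul_inv (.inl hC0) (.inl hC_top), inv_inv,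
    ENNReal.inv_mul_le_iff hC0 hC_top]
  exact denom_le_mul hq hq'

lemma mul_condProb_ne_top_of_denom_ne_top (h : denom ν w A f q x ≠ ∞) (s : Fin S) :
    (w s : ℝ≥0∞) * condProb ν (A s) f x ≠ ∞ := by
  intro hs
  refine h (ENNReal.sum_eq_top.2 ⟨s, Finset.mem_univ s, ?_⟩)
  rw [hs, ENNReal.top_div_of_ne_top ENNReal.ofReal_ne_top]

lemma toReal_denom (hq : ∀ s, 0 < q s) (hQ : ∀ s, (w s : ℝ≥0∞) * condProb ν (A s) f x ≠ ∞) :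
    (denom ν w A f q x).toReal = ∑ s, ((w s : ℝ≥0∞) * condProb ν (A s) f x).toReal / q s := by
  rw [denom, ENNReal.toReal_sum fun s _ => ENNReal.div_ne_top (hQ s) (by simpa using hq s)]
  simp only [ENNReal.toReal_div, ENNReal.toReal_ofReal (hq _).le]

lemma update_pos (hq : ∀ s, 0 < q s) {c : ℝ} (hc : 0 < c) (j s : Fin S) :
    0 < Function.update q j c s := by
  rcases eq_or_ne s j with rfl | hs
  · simpa using hc
  · simpa [hs] using hq s

lemma hasDerivAt_toReal_denom (hq : ∀ s, 0 < q s) (h : denom ν w A f q x ≠ ∞) (j : Fin S) :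
    HasDerivAt (fun c => (denom ν w A f (Function.update q j c) x).toReal)
      (-(((w j : ℝ≥0∞) * condProb ν (A j) f x).toReal / q j ^ 2)) (q j) := by
  have hQ := mul_condProb_ne_top_of_denom_ne_top h
  have hsum : HasDerivAt
      (fun c => ∑ s, ((w s : ℝ≥0∞) * condProb ν (A s) f x).toReal * (Function.update q j c s)⁻¹)
      (∑ s, ((w s : ℝ≥0∞) * condProb ν (A s) f x).toReal *
        (-(Pi.single j 1 : Fin S → ℝ) s / Function.update q j (q j) s ^ 2)) (q j) :=
    HasDerivAt.fun_sum fun s _ =>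
      ((hasDerivAt_pi.1 (hasDerivAt_update q j (q j)) s).fun_inv
        (update_pos hq (hq j) j s).ne').const_mul _
  refine (hsum.congr_of_eventuallyEq ?_).congr_deriv ?_
  · filter_upwards [lt_mem_nhds (hq j)] with c hc
    simp only [toReal_denom (update_pos hq hc j) hQ, div_eq_mul_inv]
  · simp [Pi.single_apply, div_eq_mul_inv]

/-- The posterior probability `π_j(x)` of the stratum `j` given `x` under the fitted model, where
the stratum `s` has weight `w_s Q_{s|X}(x) / q_s`. -/
noncomputable def stratumPosterior (ν : Measure Y) (w : Fin S → ℝ≥0) (A : Fin S → Set (Y × X))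
    (f : Y → X → ℝ≥0) (q : Fin S → ℝ) (j : Fin S) (x : X) : ℝ≥0∞ :=
  (w j : ℝ≥0∞) * condProb ν (A j) f x / ENNReal.ofReal (q j) / denom ν w A f q x

lemma stratumPosterior_le_one (j : Fin S) : stratumPosterior ν w A f q j x ≤ 1 := by
  refine ENNReal.div_le_of_le_mul ?_
  rw [one_mul]
  exact Finset.single_le_sum
    (f := fun s => (w s : ℝ≥0∞) * condProb ν (A s) f x / ENNReal.ofReal (q s))
    (fun _ _ => zero_le) (Finset.mem_univ j)

lemma hasDerivAt_log_denom (hq : ∀ s, 0 < q s) (h : (denom ν w A f q x).toReal ≠ 0)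
    (j : Fin S) :
    HasDerivAt (fun c => Real.log (denom ν w A f (Function.update q j c) x).toReal)
      (-((stratumPosterior ν w A f q j x).toReal / q j)) (q j) := by
  have hlog := (hasDerivAt_toReal_denom hq (ENNReal.toReal_ne_zero.1 h).2 j).log
    (by rwa [Function.update_eq_self])
  refine hlog.congr_deriv ?_
  have hqj := (hq j).ne'
  rw [Function.update_eq_self, stratumPosterior, ENNReal.toReal_div, ENNReal.toReal_div,
    ENNReal.toReal_ofReal (hq j).le]
  field_simp

/-- The score `(π_j(x) - 1_{s = j}) / q_j`, which is `∂ log p*_s(y, x; θ, q) / ∂ q_j`. -/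
noncomputable def score (ν : Measure Y) (w : Fin S → ℝ≥0) (A : Fin S → Set (Y × X))
    (f : Y → X → ℝ≥0) (q : Fin S → ℝ) (j s : Fin S) (x : X) : ℝ :=
  ((stratumPosterior ν w A f q j x).toReal - (Pi.single j 1 : Fin S → ℝ) s) / q j

lemma abs_score_le {j : Fin S} (hq : 0 < q j) (s : Fin S) : |score ν w A f q j s x| ≤ (q j)⁻¹ := by
  have hle : (stratumPosterior ν w A f q j x).toReal ≤ 1 :=
    ENNReal.toReal_mono ENNReal.one_ne_top (stratumPosterior_le_one j)
  have hnonneg : 0 ≤ (stratumPosterior ν w A f q j x).toReal := ENNReal.toReal_nonneg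
  have hnum : |(stratumPosterior ν w A f q j x).toReal - (Pi.single j 1 : Fin S → ℝ) s| ≤ 1 := by
    rw [Pi.single_apply, abs_le]
    split_ifs <;> constructor <;> linarith
  rw [score, abs_div, abs_of_pos hq, ← one_div]
  gcongr

end Denom

section PStar

variable {X Y : Type*} [MeasurableSpace X] [MeasurableSpace Y] {S : ℕ} {μ : Measure X}
  {ν : Measure Y} {w : Fin S → ℝ≥0} {A : Fin S → Set (Y × X)} {f f₀ : Y → X → ℝ≥0}
  {g₀ : X → ℝ≥0} {q q' : Fin S → ℝ}

variable (μ ν w A f f₀ g₀) in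
lemma exists_pStar_le_mul (hq : ∀ s, 0 < q s) (hq' : ∀ s, 0 < q' s) (s : Fin S) :
    ∃ C ≠ ∞, ∀ z, pStar μ ν w A f f₀ g₀ q' s z ≤ C * pStar μ ν w A f f₀ g₀ q s z := by
  obtain ⟨C, hC, hinv⟩ := exists_inv_denom_le_mul ν w A f hq hq'
  obtain ⟨R, hR, hratio⟩ :
      ∃ R ≠ ∞, (ENNReal.ofReal (q' s))⁻¹ = R * (ENNReal.ofReal (q s))⁻¹ := by
    refine ⟨ENNReal.ofReal (q s) * (ENNReal.ofReal (q' s))⁻¹,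
      ENNReal.mul_ne_top ENNReal.ofReal_ne_top (by simpa using hq' s), ?_⟩
    rw [mul_right_comm, ENNReal.mul_inv_cancel (by simpa using hq s) ENNReal.ofReal_ne_top,
      one_mul]
  refine ⟨C * R, ENNReal.mul_ne_top hC hR, fun z => ?_⟩
  simp only [pStar, gHat, div_eq_mul_inv]
  rw [hratio]
  grw [hinv]
  exact le_of_eq (by ring)

lemma FiniteLogMean.pStar_of_pos {P : Measure (Y × X)} [IsFiniteMeasure P]
    (hq : ∀ s, 0 < q s) (hq' : ∀ s, 0 < q' s) {s : Fin S}
    (h : FiniteLogMean P (pStar μ ν w A f f₀ g₀ q s)) :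
    FiniteLogMean P (pStar μ ν w A f f₀ g₀ q' s) := by
  obtain ⟨C, hC, hle⟩ := exists_pStar_le_mul μ ν w A f f₀ g₀ hq hq' s
  obtain ⟨C', hC', hle'⟩ := exists_pStar_le_mul μ ν w A f f₀ g₀ hq' hq s
  exact h.of_le_mul hC hC' hle hle'

lemma toReal_pStar_ne_zero (hq : ∀ s, 0 < q s) (hq' : ∀ s, 0 < q' s) {s : Fin S} {z : Y × X}
    (h : (pStar μ ν w A f f₀ g₀ q s z).toReal ≠ 0) :
    (pStar μ ν w A f f₀ g₀ q' s z).toReal ≠ 0 := by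
  obtain ⟨C, hC, hle⟩ := exists_pStar_le_mul μ ν w A f f₀ g₀ hq hq' s
  obtain ⟨C', -, hle'⟩ := exists_pStar_le_mul μ ν w A f f₀ g₀ hq' hq s
  exact toReal_ne_zero_of_le_mul hC (hle z) (hle' z) h

lemma toReal_pStar {s : Fin S} (hq : 0 < q s) (z : Y × X) :
    (pStar μ ν w A f f₀ g₀ q s z).toReal =
      ((f z.1 z.2 : ℝ≥0∞) * (A s).indicator 1 z * mixDensity μ ν w A f₀ g₀ z.2).toReal /
        (denom ν w A f q z.2).toReal / q s := by
  simp only [pStar, gHat, ENNReal.toReal_div, ENNReal.toReal_mul, ENNReal.toReal_ofReal hq.le,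
    mul_div_assoc]

lemma hasDerivAt_log_pStar (hq : ∀ s, 0 < q s) {s : Fin S} {z : Y × X}
    (h : (pStar μ ν w A f f₀ g₀ q s z).toReal ≠ 0) (j : Fin S) :
    HasDerivAt (fun c => Real.log (pStar μ ν w A f f₀ g₀ (Function.update q j c) s z).toReal)
      (score ν w A f q j s z.2) (q j) := by
  set K := ((f z.1 z.2 : ℝ≥0∞) * (A s).indicator 1 z * mixDensity μ ν w A f₀ g₀ z.2).toReal
  have hfactors {r : Fin S → ℝ} (hr : 0 < r s)
      (hp : (pStar μ ν w A f f₀ g₀ r s z).toReal ≠ 0) :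
      K ≠ 0 ∧ (denom ν w A f r z.2).toReal ≠ 0 := by
    rw [toReal_pStar hr] at hp
    exact div_ne_zero_iff.1 (div_ne_zero_iff.1 hp).1
  have hlog_q : HasDerivAt (fun c => Real.log (Function.update q j c s))
      ((Pi.single j 1 : Fin S → ℝ) s / q j) (q j) := by
    refine ((hasDerivAt_pi.1 (hasDerivAt_update q j (q j)) s).log
      (update_pos hq (hq j) j s).ne').congr_deriv ?_
    rcases eq_or_ne s j with rfl | hs <;> simp [*]
  have hexpand := ((hasDerivAt_log_denom hq (hfactors (hq s) h).2 j).const_sub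
    (Real.log K)).sub hlog_q
  refine (hexpand.congr_of_eventuallyEq ?_).congr_deriv (by rw [score]; ring)
  filter_upwards [lt_mem_nhds (hq j)] with c hc
  have hc_pos := update_pos hq hc j
  obtain ⟨hK, hD⟩ := hfactors (hc_pos s) (toReal_pStar_ne_zero hq hc_pos h)
  rw [toReal_pStar (hc_pos s), Real.log_div (div_ne_zero hK hD) (hc_pos s).ne',
    Real.log_div hK hD]
  rfl

end PStar

section ExpectedLogLik

variable {X Y : Type*} [MeasurableSpace X] [MeasurableSpace Y] {S : ℕ} {μ : Measure X}
  {ν : Measure Y} {w : Fin S → ℝ≥0} {A : Fin S → Set (Y × X)} {f f₀ : Y → X → ℝ≥0}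
  {g₀ : X → ℝ≥0} {q : Fin S → ℝ}

lemma lintegral_stratumPosterior_ne_top (P : Measure (Y × X)) [IsFiniteMeasure P] (j : Fin S) :
    ∫⁻ z, stratumPosterior ν w A f q j z.2 ∂P ≠ ∞ :=
  ((lintegral_mono fun _ => stratumPosterior_le_one j).trans_lt (by simp)).ne

variable [SFinite ν]

lemma measurable_stratumPosterior (hA : ∀ s, MeasurableSet (A s))
    (hf : Measurable fun z : Y × X => f z.1 z.2) (q : Fin S → ℝ) (j : Fin S) :
    Measurable (stratumPosterior ν w A f q j) :=
  (((measurable_condProb (hA j) hf).const_mul _).div_const _).div (measurable_denom hA hf q)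

lemma sum_mul_lintegral_stratumPosterior [SFinite μ] (hA : ∀ s, MeasurableSet (A s))
    (hf : Measurable fun z : Y × X => f z.1 z.2)
    (hf₀ : Measurable fun z : Y × X => f₀ z.1 z.2) (hg₀ : Measurable g₀) (j : Fin S) :
    ∑ s, (w s : ℝ≥0∞) * ∫⁻ z, stratumPosterior ν w A f q j z.2 ∂law μ ν (A s) f₀ g₀ =
      w j / ENNReal.ofReal (q j) *
        ∫⁻ x, condProb ν (A j) f x * gHat μ ν w A f f₀ g₀ q x ∂μ := by
  have hm : Measurable fun x => condProb ν (A j) f x * gHat μ ν w A f f₀ g₀ q x :=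
    (measurable_condProb (hA j) hf).mul (measurable_gHat hA hf hf₀ hg₀ q)
  rw [sum_mul_lintegral_snd_law w hA hf₀ hg₀ (measurable_stratumPosterior hA hf q j),
    ← lintegral_const_mul _ hm]
  refine lintegral_congr fun x => ?_
  simp only [stratumPosterior, gHat, div_eq_mul_inv]
  ring

lemma measurable_score (hA : ∀ s, MeasurableSet (A s))
    (hf : Measurable fun z : Y × X => f z.1 z.2) (q : Fin S → ℝ) (j s : Fin S) :
    Measurable (score ν w A f q j s) :=
  ((measurable_stratumPosterior hA hf q j).ennreal_toReal.sub_const _).div_const _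

lemma integral_score {P : Measure (Y × X)} [IsProbabilityMeasure P]
    (hA : ∀ s, MeasurableSet (A s)) (hf : Measurable fun z : Y × X => f z.1 z.2) (j s : Fin S) :
    ∫ z, score ν w A f q j s z.2 ∂P =
      ((∫⁻ z, stratumPosterior ν w A f q j z.2 ∂P).toReal - (Pi.single j 1 : Fin S → ℝ) s) /
        q j := by
  have hπ : AEMeasurable (fun z : Y × X => stratumPosterior ν w A f q j z.2) P :=
    ((measurable_stratumPosterior hA hf q j).comp measurable_snd).aemeasurable
  simp only [score]
  rw [integral_div, integral_sub
    (integrable_toReal_of_lintegral_ne_top hπ (lintegral_stratumPosterior_ne_top P j))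
    (integrable_const _), integral_toReal hπ
      (.of_forall fun z => (stratumPosterior_le_one j).trans_lt ENNReal.one_lt_top),
    integral_const, probReal_univ, one_smul]

lemma hasDerivAt_logMean_pStar {P : Measure (Y × X)} [IsFiniteMeasure P]
    (hA : ∀ s, MeasurableSet (A s)) (hf : Measurable fun z : Y × X => f z.1 z.2)
    (hf₀ : Measurable fun z : Y × X => f₀ z.1 z.2) (hg₀ : Measurable g₀)
    (hq : ∀ s, 0 < q s) {s : Fin S} (h : FiniteLogMean P (pStar μ ν w A f f₀ g₀ q s))
    (j : Fin S) :
    HasDerivAt (fun c => logMean P (pStar μ ν w A f f₀ g₀ (Function.update q j c) s))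
      (∫ z, score ν w A f q j s z.2 ∂P) (q j) := by
  have hp := measurable_pStar (μ := μ) (ν := ν) (w := w) hA hf hf₀ hg₀
  have hpos {c : ℝ} (hc : c ∈ Set.Ioi (q j / 2)) := update_pos hq ((half_pos (hq j)).trans hc) j
  have hbound : ∀ᵐ z ∂P, ∀ c ∈ Set.Ioi (q j / 2),
      ‖score ν w A f (Function.update q j c) j s z.2‖ ≤ (q j / 2)⁻¹ := by
    refine .of_forall fun z c hc => (abs_score_le (hpos hc j) s).trans ?_
    rw [Function.update_self]
    exact inv_anti₀ (half_pos (hq j)) (le_of_lt hc)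
  have hdiff : ∀ᵐ z ∂P, ∀ c ∈ Set.Ioi (q j / 2),
      HasDerivAt (fun c => Real.log (pStar μ ν w A f f₀ g₀ (Function.update q j c) s z).toReal)
        (score ν w A f (Function.update q j c) j s z.2) c := by
    filter_upwards [h.ae_toReal_ne_zero (hp q s)] with z hz c hc
    simpa using hasDerivAt_log_pStar (hpos hc) (toReal_pStar_ne_zero hq (hpos hc) hz) j
  simp only [logMean_eq_integral_log]
  simpa only [Function.update_eq_self] using
    (hasDerivAt_integral_of_dominated_loc_of_deriv_le (Ioi_mem_nhds (half_lt_self (hq j)))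
      (.of_forall fun c => (hp _ s).ennreal_toReal.log.aestronglyMeasurable)
      (by simpa only [Function.update_eq_self] using h.integrable_log (hp q s))
      ((measurable_score hA hf _ j s).comp measurable_snd).aestronglyMeasurable
      hbound (integrable_const _) hdiff).2

lemma lintegral_condProb_mul_gHat_ne_top [SFinite μ] (hA : ∀ s, MeasurableSet (A s))
    (hf : Measurable fun z : Y × X => f z.1 z.2)
    (hf₀ : Measurable fun z : Y × X => f₀ z.1 z.2) (hg₀ : Measurable g₀)
    [∀ s, IsFiniteMeasure (law μ ν (A s) f₀ g₀)] {j : Fin S} (hw : 0 < w j) :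
    ∫⁻ x, condProb ν (A j) f x * gHat μ ν w A f f₀ g₀ q x ∂μ ≠ ∞ := by
  intro htop
  have hsum := sum_mul_lintegral_stratumPosterior (μ := μ) (ν := ν) (w := w) (q := q)
    hA hf hf₀ hg₀ j
  have hcoef : (w j : ℝ≥0∞) / ENNReal.ofReal (q j) ≠ 0 :=
    ENNReal.div_ne_zero.2 ⟨by simpa using hw.ne', ENNReal.ofReal_ne_top⟩
  rw [htop, ENNReal.mul_top hcoef] at hsum
  exact ENNReal.sum_ne_top.2 (fun s _ => ENNReal.mul_ne_top ENNReal.coe_ne_top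
    (lintegral_stratumPosterior_ne_top _ j)) hsum

lemma hasDerivAt_sum_mul_logMean_pStar [SFinite μ] (hA : ∀ s, MeasurableSet (A s))
    (hf : Measurable fun z : Y × X => f z.1 z.2)
    (hf₀ : Measurable fun z : Y × X => f₀ z.1 z.2) (hg₀ : Measurable g₀)
    [∀ s, IsProbabilityMeasure (law μ ν (A s) f₀ g₀)] (hq : ∀ s, 0 < q s)
    (h : ∀ s, FiniteLogMean (law μ ν (A s) f₀ g₀) (pStar μ ν w A f f₀ g₀ q s)) (j : Fin S) :
    HasDerivAt (fun c => ∑ s, (w s : ℝ) * logMean (law μ ν (A s) f₀ g₀)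
        (pStar μ ν w A f f₀ g₀ (Function.update q j c) s))
      ((w j : ℝ) / q j ^ 2 *
        ((∫⁻ x, condProb ν (A j) f x * gHat μ ν w A f f₀ g₀ q x ∂μ).toReal - q j)) (q j) := by
  have hmean : ∑ s, (w s : ℝ) *
      (∫⁻ z, stratumPosterior ν w A f q j z.2 ∂law μ ν (A s) f₀ g₀).toReal =
      w j / q j * (∫⁻ x, condProb ν (A j) f x * gHat μ ν w A f f₀ g₀ q x ∂μ).toReal := by
    have hsum := congrArg ENNReal.toReal
      (sum_mul_lintegral_stratumPosterior (μ := μ) (ν := ν) (w := w) (q := q) hA hf hf₀ hg₀ j)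
    rw [ENNReal.toReal_sum fun s _ => ENNReal.mul_ne_top ENNReal.coe_ne_top
      (lintegral_stratumPosterior_ne_top _ j)] at hsum
    simpa only [ENNReal.toReal_mul, ENNReal.toReal_div, ENNReal.coe_toReal,
      ENNReal.toReal_ofReal (hq j).le] using hsum
  have hsum_deriv := HasDerivAt.fun_sum (u := Finset.univ) fun s _ =>
    (hasDerivAt_logMean_pStar hA hf hf₀ hg₀ hq (h s) j).const_mul (w s : ℝ)
  refine hsum_deriv.congr_deriv ?_
  have hqj := (hq j).ne'
  simp only [integral_score hA hf, mul_div_assoc', mul_sub, ← Finset.sum_div,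
    Finset.sum_sub_distrib, hmean, Pi.single_apply, mul_ite, mul_one, mul_zero,
    Finset.sum_ite_eq', Finset.mem_univ, if_true]
  field_simp

end ExpectedLogLik

section WithOne

variable {n : ℕ} {q : Fin n → ℝ}

lemma withOne_castSucc (q : Fin n → ℝ) (j : Fin n) : withOne q j.castSucc = q j :=
  Fin.snoc_castSucc ..

lemma withOne_update (q : Fin n → ℝ) (j : Fin n) (c : ℝ) :
    withOne (Function.update q j c) = Function.update (withOne q) j.castSucc c :=
  Fin.snoc_update ..

lemma withOne_pos (hq : ∀ j, 0 < q j) (s : Fin (n + 1)) : 0 < withOne q s := by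
  induction s using Fin.lastCases with
  | last => simp [withOne]
  | cast j => simpa only [withOne_castSucc] using hq j

end WithOne

end StratifiedSampling

theorem stmt_11_general {X Y : Type*} [MeasurableSpace X] [MeasurableSpace Y]
    (μ : Measure X) [SFinite μ] (ν : Measure Y) [SFinite ν] {S : ℕ} (w : Fin S → ℝ≥0)
    (𝒮 : Fin S → Set (Y × X)) (h𝒮 : ∀ s, MeasurableSet (𝒮 s))
    {f f₀ : Y → X → ℝ≥0} (hf : Measurable fun z : Y × X => f z.1 z.2)
    (hf₀ : Measurable fun z : Y × X => f₀ z.1 z.2) {g₀ : X → ℝ≥0} (hg₀ : Measurable g₀)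
    (hQ₀ : ∀ s, prob μ ν (𝒮 s) f₀ g₀ ≠ 0 ∧ prob μ ν (𝒮 s) f₀ g₀ ≠ ∞)
    {q : Fin S → ℝ} (hq : ∀ s, 0 < q s)
    (hfin : ∀ s, FiniteLogMean (law μ ν (𝒮 s) f₀ g₀) (pStar μ ν w 𝒮 f f₀ g₀ q s)) :
    (∀ q' : Fin S → ℝ, (∀ s, 0 < q' s) → ∀ s,
      FiniteLogMean (law μ ν (𝒮 s) f₀ g₀) (pStar μ ν w 𝒮 f f₀ g₀ q' s)) ∧
    ∀ j : Fin S, 0 < w j →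
      (∫⁻ x, condProb ν (𝒮 j) f x * gHat μ ν w 𝒮 f f₀ g₀ q x ∂μ) ≠ ∞ ∧
      HasDerivAt
        (fun c => ∑ s, (w s : ℝ) * logMean (law μ ν (𝒮 s) f₀ g₀)
          (pStar μ ν w 𝒮 f f₀ g₀ (Function.update q j c) s))
        ((w j : ℝ) / q j ^ 2 *
          ((∫⁻ x, condProb ν (𝒮 j) f x * gHat μ ν w 𝒮 f f₀ g₀ q x ∂μ).toReal - q j))
        (q j) ∧
      ((∫⁻ x, condProb ν (𝒮 j) f x * gHat μ ν w 𝒮 f f₀ g₀ q x ∂μ) = ENNReal.ofReal (q j) →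
        HasDerivAt
          (fun c => ∑ s, (w s : ℝ) * logMean (law μ ν (𝒮 s) f₀ g₀)
            (pStar μ ν w 𝒮 f f₀ g₀ (Function.update q j c) s))
          0 (q j)) := by
  have (s : Fin S) : IsProbabilityMeasure (law μ ν (𝒮 s) f₀ g₀) :=
    isProbabilityMeasure_law (h𝒮 s) hf₀ hg₀ (hQ₀ s).1 (hQ₀ s).2
  refine ⟨fun q' hq' s => (hfin s).pStar_of_pos hq hq', fun j hwj => ?_⟩
  have hderiv := hasDerivAt_sum_mul_logMean_pStar h𝒮 hf hf₀ hg₀ hq hfin j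
  refine ⟨lintegral_condProb_mul_gHat_ne_top h𝒮 hf hf₀ hg₀ hwj, hderiv, fun hI => ?_⟩
  simpa only [hI, ENNReal.toReal_ofReal (hq j).le, sub_self, mul_zero] using hderiv

theorem stmt_11 {X Y Θ : Type*} [MeasurableSpace X] [MeasurableSpace Y]
    (μ : Measure X) [SigmaFinite μ] (ν : Measure Y) [SigmaFinite ν]
    -- the number of strata is `S = n + 1`
    (n : ℕ) (w : Fin (n + 1) → ℝ≥0) (hw_pos : ∀ s, 0 < w s) (hw_sum : ∑ s, w s = 1)
    (𝒮 : Fin (n + 1) → Set (Y × X)) (h𝒮 : ∀ s, MeasurableSet (𝒮 s))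
    (f : Θ → Y → X → ℝ≥0) (hf : ∀ θ, Measurable fun z : Y × X => f θ z.1 z.2)
    (θ₀ : Θ) (g₀ : X → ℝ≥0) (hg₀ : Measurable g₀)
    (hQ₀ : ∀ s, prob μ ν (𝒮 s) (f θ₀) g₀ ≠ 0 ∧ prob μ ν (𝒮 s) (f θ₀) g₀ ≠ ∞)
    (θ : Θ) (q : Fin n → ℝ) (hq : ∀ j, 0 < q j)
    (hden : ∀ x, 0 < denom ν w 𝒮 (f θ) (withOne q) x)
    -- the expectations of the log-densities at `q` are finite
    (hfin : ∀ s, FiniteLogMean (law μ ν (𝒮 s) (f θ₀) g₀)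
      (pStar μ ν w 𝒮 (f θ) (f θ₀) g₀ (withOne q) s)) :
    -- the expectations are finite at all positive parameters, so that the function below is
    -- the genuine expected log-likelihood there
    (∀ q' : Fin n → ℝ, (∀ j, 0 < q' j) → ∀ s, FiniteLogMean (law μ ν (𝒮 s) (f θ₀) g₀)
      (pStar μ ν w 𝒮 (f θ) (f θ₀) g₀ (withOne q') s)) ∧
    ∀ j : Fin n,
      (∫⁻ x, condProb ν (𝒮 j.castSucc) (f θ) x *
        gHat μ ν w 𝒮 (f θ) (f θ₀) g₀ (withOne q) x ∂μ) ≠ ∞ ∧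
      HasDerivAt
        (fun c => expectedLogLik μ ν w 𝒮 (f θ) (f θ₀) g₀ (Function.update q j c))
        ((w j.castSucc : ℝ) / q j ^ 2 *
          ((∫⁻ x, condProb ν (𝒮 j.castSucc) (f θ) x *
            gHat μ ν w 𝒮 (f θ) (f θ₀) g₀ (withOne q) x ∂μ).toReal - q j))
        (q j) ∧
      ((∫⁻ x, condProb ν (𝒮 j.castSucc) (f θ) x *
          gHat μ ν w 𝒮 (f θ) (f θ₀) g₀ (withOne q) x ∂μ) = ENNReal.ofReal (q j) →
        HasDerivAt
          (fun c => expectedLogLik μ ν w 𝒮 (f θ) (f θ₀) g₀ (Function.update q j c))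
          0 (q j)) := by
  obtain ⟨hfin', hderiv⟩ := stmt_11_general μ ν w 𝒮 h𝒮 (hf θ) (hf θ₀) hg₀ hQ₀ (withOne_pos hq) hfin
  refine ⟨fun q' hq' => hfin' _ (withOne_pos hq'), fun j => ?_⟩
  simpa only [expectedLogLik, withOne_update, withOne_castSucc] using hderiv j.castSucc (hw_pos _)
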